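/- Let (Ω, F, P) be a probability space with a filtration F_0 ⊆ F_1 ⊆ ⋯ ⊆ F_n, and let X_1,…,X_n be random variables with X_i F_i-measurable, satisfying μ̲ ≤ E[X_i | F_{i−1}] ≤ μ̄ almost surely for all i ≤ n, and E[|X_i|^{1+α}] ≤ C_α for some α ∈ (0,1] and all i ≤ n. Then for every Lipschitz function φ : ℝ → ℝ with Lipschitz constant L, E[φ(S_n/n)] − max_{r∈[μ̲,μ̄]} φ(r) ≤ L · (4C_α/n^α)^{1/(1+α)}, where S_n := X_1 + ⋯ + X_n. -/

import Mathlib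

open MeasureTheory

/-!
The proof compares `S_n` with the sum of the conditional means. Put `p = 1 + α`,
`m_i = E[X_i | F_{i-1}]` and `D_i = X_i - m_i`. The average of the `m_i` lies in `[μ̲, μ̄]`, so the
Lipschitz property gives `φ(S_n/n) ≤ max φ + L |M_n| / n`, where `M_n = D_1 + ⋯ + D_n` is a
martingale, and Jensen's inequality reduces the claim to `E|M_n|^p ≤ 4 n C_α`.

That bound is the von Bahr–Esseen inequality. It rests on the smoothness inequality
`|a + b|^p ≤ |a|^p + p ψ(a) b + 2^{1-α} |b|^p` (`abs_add_rpow_le`), where `ψ(x) = |x|^{α-1} x`,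
which holds because `ψ` is `α`-Hölder with constant `2^{1-α}` (`signedPow_holder`). With
`a = M_{k-1}` and `b = D_k` the middle term has mean zero, so each step adds at most `2^{1-α} E|D_k|^p`
(`integral_abs_add_rpow_le`). Finally `E|D_k|^p ≤ 2^p E|X_k|^p` by convexity and conditional Jensen
(`centered_moment`), and `2^{1-α} · 2^{1+α} = 4`.
-/

/-- The odd power `sgn(x) |x|^α`, written as `|x|^{α-1} x`; up to the factor `1 + α` it is the
derivative of `|x|^{1+α}`. For `α > 0` the formula gives the correct value `0` at `x = 0`. -/
noncomputable def signedPow (α x : ℝ) : ℝ := |x| ^ (α - 1) * x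

lemma signedPow_of_nonneg {α x : ℝ} (hα : 0 < α) (hx : 0 ≤ x) : signedPow α x = x ^ α := by
  unfold signedPow
  rcases hx.eq_or_lt with rfl | hx
  · simp [Real.zero_rpow hα.ne']
  · rw [abs_of_pos hx, Real.rpow_sub_one hx.ne']
    field_simp

lemma signedPow_neg (α x : ℝ) : signedPow α (-x) = -signedPow α x := by
  simp [signedPow]

lemma abs_signedPow {α : ℝ} (hα : 0 < α) (x : ℝ) : |signedPow α x| = |x| ^ α := by
  rw [← signedPow_of_nonneg hα (abs_nonneg x)]
  simp [signedPow, abs_mul, Real.abs_rpow_of_nonneg]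

lemma signedPow_holder {α : ℝ} (h0 : 0 < α) (h1 : α ≤ 1) (a : ℝ) {b : ℝ} (hb : 0 ≤ b) :
    signedPow α (a + b) - signedPow α a ≤ 2 ^ (1 - α) * b ^ α := by
  have hc : (1 : ℝ) ≤ 2 ^ (1 - α) := Real.one_le_rpow (by norm_num) (by linarith)
  have hbα : 0 ≤ b ^ α := Real.rpow_nonneg hb _
  rcases le_total 0 a with ha | ha
  · rw [signedPow_of_nonneg h0 ha, signedPow_of_nonneg h0 (by linarith)]
    have := Real.rpow_add_le_add_rpow ha hb h0.le h1
    nlinarith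
  · rcases le_total (a + b) 0 with hab | hab
    · have e1 := signedPow_neg α (a + b)
      have e2 := signedPow_neg α a
      rw [signedPow_of_nonneg h0 (by linarith)] at e1 e2
      have := Real.rpow_add_le_add_rpow (show 0 ≤ -(a + b) by linarith) hb h0.le h1
      rw [show -(a + b) + b = -a by ring] at this
      nlinarith
    · have e2 := signedPow_neg α a
      rw [signedPow_of_nonneg h0 (by linarith)] at e2
      rw [signedPow_of_nonneg h0 hab]
      -- midpoint concavity of `t ↦ t ^ α` at `a + b` and `-a`, whose sum is `b`
      have := (Real.concaveOn_rpow h0.le h1).2 (show a + b ∈ Set.Ici (0 : ℝ) from hab)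
        (show -a ∈ Set.Ici (0 : ℝ) by simpa using ha) (show (0 : ℝ) ≤ 1 / 2 by norm_num)
        (show (0 : ℝ) ≤ 1 / 2 by norm_num) (by norm_num)
      simp only [smul_eq_mul] at this
      rw [show 1 / 2 * (a + b) + 1 / 2 * (-a) = b / 2 by ring, Real.div_rpow hb (by norm_num)]
        at this
      have h2 : (2 : ℝ) ^ (1 - α) = 2 / 2 ^ α := by
        rw [Real.rpow_sub (by norm_num), Real.rpow_one]
      rw [h2]
      have : 2 / 2 ^ α * b ^ α = 2 * (b ^ α / 2 ^ α) := by ring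
      linarith

lemma abs_add_rpow_le_of_nonneg {α : ℝ} (h0 : 0 < α) (h1 : α ≤ 1) (a : ℝ) {b : ℝ} (hb : 0 ≤ b) :
    |a + b| ^ (1 + α) ≤
      |a| ^ (1 + α) + (1 + α) * signedPow α a * b + 2 ^ (1 - α) * b ^ (1 + α) := by
  let h : ℝ → ℝ := fun t =>
    |a| ^ (1 + α) + (1 + α) * signedPow α a * t + 2 ^ (1 - α) * t ^ (1 + α) - |a + t| ^ (1 + α)
  have hd : ∀ t, HasDerivAt h ((1 + α) * signedPow α a + 2 ^ (1 - α) * ((1 + α) * t ^ α)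
      - (1 + α) * signedPow α (a + t)) t := by
    intro t
    have d1 : HasDerivAt (fun t : ℝ => |a + t| ^ (1 + α)) ((1 + α) * signedPow α (a + t)) t := by
      have := (hasDerivAt_abs_rpow (a + t) (p := 1 + α) (by linarith)).comp_const_add a t
      rwa [show 1 + α - 2 = α - 1 by ring, mul_assoc] at this
    have d2 : HasDerivAt (fun t : ℝ => t ^ (1 + α)) ((1 + α) * t ^ α) t := by
      have := Real.hasDerivAt_rpow_const (x := t) (p := 1 + α) (Or.inr (by linarith))
      rwa [show 1 + α - 1 = α by ring] at this
    have d3 : HasDerivAt (fun t : ℝ => |a| ^ (1 + α) + (1 + α) * signedPow α a * t)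
        ((1 + α) * signedPow α a) t := by
      simpa using ((hasDerivAt_id t).const_mul ((1 + α) * signedPow α a)).const_add (|a| ^ (1 + α))
    exact (d3.add (d2.const_mul _)).sub d1
  have hmono : MonotoneOn h (Set.Ici 0) := by
    refine monotoneOn_of_hasDerivWithinAt_nonneg (convex_Ici 0)
      (fun t _ => (hd t).continuousAt.continuousWithinAt) (fun t _ => (hd t).hasDerivWithinAt) ?_
    intro t ht
    rw [interior_Ici, Set.mem_Ioi] at ht
    have := signedPow_holder h0 h1 a ht.le
    nlinarith
  have := hmono (Set.mem_Ici.2 le_rfl) (Set.mem_Ici.2 hb) hb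
  simp only [h, add_zero, mul_zero, Real.zero_rpow (show 1 + α ≠ 0 by linarith), sub_self] at this
  linarith

/-- First-order expansion of `|·|^{1+α}`, with remainder constant `2^{1-α}`. -/
lemma abs_add_rpow_le {α : ℝ} (h0 : 0 < α) (h1 : α ≤ 1) (a b : ℝ) :
    |a + b| ^ (1 + α) ≤
      |a| ^ (1 + α) + (1 + α) * (signedPow α a * b) + 2 ^ (1 - α) * |b| ^ (1 + α) := by
  rcases le_total 0 b with hb | hb
  · have := abs_add_rpow_le_of_nonneg h0 h1 a hb
    rw [abs_of_nonneg hb]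
    linarith
  · have := abs_add_rpow_le_of_nonneg h0 h1 (-a) (b := -b) (by linarith)
    rw [← neg_add, abs_neg, abs_neg, signedPow_neg] at this
    rw [abs_of_nonpos hb]
    linarith

lemma abs_sub_rpow_le {p : ℝ} (hp : 1 ≤ p) (x y : ℝ) :
    |x - y| ^ p ≤ 2 ^ (p - 1) * (|x| ^ p + |y| ^ p) := by
  have h := NNReal.rpow_add_le_mul_rpow_add_rpow ‖x‖₊ ‖y‖₊ hp
  have h' : (|x| + |y|) ^ p ≤ 2 ^ (p - 1) * (|x| ^ p + |y| ^ p) := by exact_mod_cast h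
  exact (Real.rpow_le_rpow (abs_nonneg _) (abs_sub x y) (by linarith)).trans h'

section Moments

variable {Ω : Type*} {m : MeasurableSpace Ω} [mΩ : MeasurableSpace Ω] {P : Measure Ω}

lemma memLp_iff_abs_rpow {p : ℝ} (hp : 0 < p) {f : Ω → ℝ} (hf : AEStronglyMeasurable f P) :
    Integrable (fun ω => |f ω| ^ p) P ↔ MemLp f (ENNReal.ofReal p) P := by
  have := integrable_norm_rpow_iff (p := ENNReal.ofReal p) hf (by simpa using hp)
    ENNReal.ofReal_ne_top
  simpa [ENNReal.toReal_ofReal hp.le] using this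

variable [IsProbabilityMeasure P]

/-- One martingale step of the von Bahr–Esseen inequality. -/
lemma integral_abs_add_rpow_le {α : ℝ} (h0 : 0 < α) (h1 : α ≤ 1)
    (hm : m ≤ mΩ) {M D : Ω → ℝ} (hM : StronglyMeasurable[m] M)
    (hMp : MemLp M (ENNReal.ofReal (1 + α)) P) (hDp : MemLp D (ENNReal.ofReal (1 + α)) P)
    (hD0 : P[D | m] =ᵐ[P] 0) :
    ∫ ω, |M ω + D ω| ^ (1 + α) ∂P ≤
      ∫ ω, |M ω| ^ (1 + α) ∂P + 2 ^ (1 - α) * ∫ ω, |D ω| ^ (1 + α) ∂P := by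
  have hp : (0 : ℝ) < 1 + α := by linarith
  have hDint : Integrable D P := hDp.integrable (by simpa using h0.le)
  have iM := (memLp_iff_abs_rpow hp hMp.1).2 hMp
  have iD := (memLp_iff_abs_rpow hp hDp.1).2 hDp
  have iMD := (memLp_iff_abs_rpow hp (hMp.add hDp).1).2 (hMp.add hDp)
  have hψ : StronglyMeasurable[m] (fun ω => signedPow α (M ω)) := by
    have : Measurable (signedPow α) := by unfold signedPow; fun_prop
    exact (this.comp hM.measurable).stronglyMeasurable
  have iψ : Integrable ((fun ω => signedPow α (M ω)) * D) P := by
    refine (iM.add iD).mono' ((hψ.mono hm).aestronglyMeasurable.mul hDp.1) (ae_of_all _ fun ω => ?_)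
    simp only [Pi.mul_apply, Pi.add_apply, norm_mul, Real.norm_eq_abs, abs_signedPow h0]
    -- with `c` the larger of `|M|` and `|D|`, the product is at most `c ^ α * c`
    have key : ∀ c : ℝ, 0 ≤ c → c ^ α * c = c ^ (1 + α) := fun c hc => by
      rw [add_comm, Real.rpow_add_one' hc (by linarith)]
    have n1 := Real.rpow_nonneg (abs_nonneg (M ω)) (1 + α)
    have n2 := Real.rpow_nonneg (abs_nonneg (D ω)) (1 + α)
    rcases le_total |M ω| |D ω| with h | h
    · have := mul_le_mul_of_nonneg_right
        (Real.rpow_le_rpow (abs_nonneg _) h h0.le) (abs_nonneg (D ω))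
      rw [key _ (abs_nonneg _)] at this
      linarith
    · have := mul_le_mul_of_nonneg_left h (Real.rpow_nonneg (abs_nonneg (M ω)) α)
      rw [key _ (abs_nonneg _)] at this
      linarith
  have hzero : ∫ ω, signedPow α (M ω) * D ω ∂P = 0 := by
    have hpull := condExp_mul_of_stronglyMeasurable_left hψ iψ hDint
    calc ∫ ω, signedPow α (M ω) * D ω ∂P
        = ∫ ω, (P[(fun ω => signedPow α (M ω)) * D | m]) ω ∂P := (integral_condExp hm).symm
      _ = ∫ _, (0 : ℝ) ∂P := by
          refine integral_congr_ae ?_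
          filter_upwards [hpull, hD0] with ω e1 e2
          rw [e1, Pi.mul_apply, e2]
          simp
      _ = 0 := by simp
  have iψ' : Integrable (fun ω => signedPow α (M ω) * D ω) P := iψ
  calc ∫ ω, |M ω + D ω| ^ (1 + α) ∂P
      ≤ ∫ ω, (|M ω| ^ (1 + α) + (1 + α) * (signedPow α (M ω) * D ω)
          + 2 ^ (1 - α) * |D ω| ^ (1 + α)) ∂P :=
        integral_mono iMD ((iM.add (iψ'.const_mul _)).add (iD.const_mul _))
          fun ω => abs_add_rpow_le h0 h1 _ _
    _ = _ := by
        have iMψ : Integrable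
            (fun ω => |M ω| ^ (1 + α) + (1 + α) * (signedPow α (M ω) * D ω)) P :=
          iM.add (iψ'.const_mul _)
        rw [integral_add iMψ (iD.const_mul _), integral_add iM (iψ'.const_mul _),
          integral_const_mul, integral_const_mul, hzero]
        ring

lemma centered_moment {p : ℝ} (hp : 1 ≤ p) (hm : m ≤ mΩ) {X : Ω → ℝ}
    (hX : MemLp X (ENNReal.ofReal p) P) :
    ∫ ω, |(X - P[X | m]) ω| ^ p ∂P ≤ 2 ^ p * ∫ ω, |X ω| ^ p ∂P := by
  have hp0 : 0 < p := by linarith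
  have hc : MemLp (P[X | m]) (ENNReal.ofReal p) P := hX.condExp (by simpa using hp)
  have iX := (memLp_iff_abs_rpow hp0 hX.1).2 hX
  have iC := (memLp_iff_abs_rpow hp0 hc.1).2 hc
  have iD := (memLp_iff_abs_rpow hp0 (hX.sub hc).1).2 (hX.sub hc)
  have hJ : ∫ ω, |(P[X | m]) ω| ^ p ∂P ≤ ∫ ω, |X ω| ^ p ∂P := by
    rw [← integral_condExp hm (f := fun ω => |X ω| ^ p)]
    have hj := Integrable.norm_condExp_rpow_le (m := m) (f := X) (μ := P) hp
      (by simpa only [Real.norm_eq_abs] using iX)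
    refine integral_mono_ae iC integrable_condExp ?_
    filter_upwards [hj] with ω h
    simpa only [Real.norm_eq_abs] using h
  calc ∫ ω, |(X - P[X | m]) ω| ^ p ∂P
      ≤ ∫ ω, 2 ^ (p - 1) * (|X ω| ^ p + |(P[X | m]) ω| ^ p) ∂P :=
        integral_mono iD ((iX.add iC).const_mul _) fun ω => abs_sub_rpow_le hp _ _
    _ = 2 ^ (p - 1) * (∫ ω, |X ω| ^ p ∂P + ∫ ω, |(P[X | m]) ω| ^ p ∂P) := by
        rw [integral_const_mul, integral_add iX iC]
    _ ≤ 2 ^ (p - 1) * (2 * ∫ ω, |X ω| ^ p ∂P) := by gcongr; linarith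
    _ = 2 ^ p * ∫ ω, |X ω| ^ p ∂P := by
        rw [Real.rpow_sub_one (by norm_num)]; ring

end Moments

/-- One-sided LLN estimate for adapted sequences whose conditional means lie in
`[μ̲, μ̄]`: `E[φ(S_n/n)] - max_{r∈[μ̲,μ̄]} φ(r) ≤ L (4C_α / n^α)^{1/(1+α)}`. -/
theorem lln_rate_adapted
    {Ω : Type*} [MeasurableSpace Ω] (P : Measure Ω) [IsProbabilityMeasure P]
    (n : ℕ) (hn : 1 ≤ n) (ℱ : ℕ → MeasurableSpace Ω)
    (hℱ_mono : Monotone ℱ) (hℱ_le : ∀ i, ℱ i ≤ ‹MeasurableSpace Ω›)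
    (X : ℕ → Ω → ℝ)
    (hmeas : ∀ i ∈ Finset.Icc 1 n, Measurable[ℱ i] (X i))
    (hint : ∀ i ∈ Finset.Icc 1 n, Integrable (X i) P)
    (μlow μbar : ℝ) (hμ : μlow ≤ μbar)
    (hcond : ∀ i ∈ Finset.Icc 1 n,
      ∀ᵐ ω ∂P, μlow ≤ (P[X i | ℱ (i - 1)]) ω ∧ (P[X i | ℱ (i - 1)]) ω ≤ μbar)
    (α : ℝ) (hα : α ∈ Set.Ioc (0 : ℝ) 1) (Cα : ℝ) (hCα : 0 < Cα)
    (hmom : ∀ i ∈ Finset.Icc 1 n,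
      Integrable (fun ω => |X i ω| ^ (1 + α)) P ∧
        ∫ ω, |X i ω| ^ (1 + α) ∂P ≤ Cα)
    (φ : ℝ → ℝ) (L : NNReal) (hφ : LipschitzWith L φ) :
    ∫ ω, φ ((∑ i ∈ Finset.Icc 1 n, X i ω) / n) ∂P -
        sSup (φ '' Set.Icc μlow μbar) ≤
      (L : ℝ) * (4 * Cα / (n : ℝ) ^ α) ^ (1 / (1 + α)) := by
  obtain ⟨h0, h1⟩ := hα
  have hp : (0 : ℝ) < 1 + α := by linarith
  have hn0 : (0 : ℝ) < n := by exact_mod_cast hn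
  set q := ENNReal.ofReal (1 + α) with hq
  have hq1 : 1 ≤ q := by simpa [hq] using h0.le
  have hXp : ∀ i ∈ Finset.Icc 1 n, MemLp (X i) q P := fun i hi =>
    (memLp_iff_abs_rpow hp (hint i hi).1).1 (hmom i hi).1
  let D : ℕ → Ω → ℝ := fun i => X i - P[X i | ℱ (i - 1)]
  have hDp : ∀ i ∈ Finset.Icc 1 n, MemLp (D i) q P := fun i hi =>
    (hXp i hi).sub ((hXp i hi).condExp hq1)
  have hDmeas : ∀ i ∈ Finset.Icc 1 n, StronglyMeasurable[ℱ i] (D i) := fun i hi =>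
    (hmeas i hi).stronglyMeasurable.sub
      (stronglyMeasurable_condExp.mono (hℱ_mono (Nat.sub_le i 1)))
  have hD0 : ∀ i ∈ Finset.Icc 1 n, P[D i | ℱ (i - 1)] =ᵐ[P] 0 := fun i hi => by
    have e := condExp_sub (hint i hi) (integrable_condExp (f := X i) (m := ℱ (i - 1)) (μ := P))
      (ℱ (i - 1))
    rw [condExp_of_stronglyMeasurable (hℱ_le _) stronglyMeasurable_condExp integrable_condExp] at e
    simpa using e
  have hDmom : ∀ i ∈ Finset.Icc 1 n, ∫ ω, |D i ω| ^ (1 + α) ∂P ≤ 2 ^ (1 + α) * Cα := fun i hi =>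
    (centered_moment (by linarith) (hℱ_le _) (hXp i hi)).trans
      (mul_le_mul_of_nonneg_left (hmom i hi).2 (by positivity))
  have h4 : (2 : ℝ) ^ (1 - α) * 2 ^ (1 + α) = 4 := by
    rw [← Real.rpow_add (by norm_num), show 1 - α + (1 + α) = (2 : ℕ) by push_cast; ring,
      Real.rpow_natCast]
    norm_num
  have hmart : ∀ k ≤ n, StronglyMeasurable[ℱ k] (fun ω => ∑ i ∈ Finset.Icc 1 k, D i ω) ∧
      MemLp (fun ω => ∑ i ∈ Finset.Icc 1 k, D i ω) q P ∧
      ∫ ω, |∑ i ∈ Finset.Icc 1 k, D i ω| ^ (1 + α) ∂P ≤ k * (4 * Cα) := by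
    intro k
    induction k with
    | zero =>
      intro _
      simp only [zero_lt_one, Finset.Icc_eq_empty_of_lt, Finset.sum_empty, abs_zero,
        Real.zero_rpow hp.ne']
      exact ⟨stronglyMeasurable_const, MemLp.zero', by simp⟩
    | succ k ih =>
      intro hk
      obtain ⟨i1, i2, i3⟩ := ih (by omega)
      have hmem : k + 1 ∈ Finset.Icc 1 n := by simp; omega
      simp only [Finset.sum_Icc_succ_top (show 1 ≤ k + 1 by omega)]
      refine ⟨(i1.mono (hℱ_mono (Nat.le_succ k))).add (hDmeas _ hmem), i2.add (hDp _ hmem), ?_⟩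
      have step := integral_abs_add_rpow_le h0 h1 (hℱ_le k) i1 i2 (hDp _ hmem) (hD0 _ hmem)
      have hd := mul_le_mul_of_nonneg_left (hDmom _ hmem)
        (show (0 : ℝ) ≤ 2 ^ (1 - α) by positivity)
      rw [← mul_assoc, h4] at hd
      push_cast
      linarith
  obtain ⟨-, hMp, hMmom⟩ := hmart n le_rfl
  set M : Ω → ℝ := fun ω => ∑ i ∈ Finset.Icc 1 n, D i ω with hMdef
  have hMint : Integrable M P := hMp.integrable hq1
  have hMabs : ∫ ω, |M ω| ∂P ≤ (n * (4 * Cα)) ^ (1 / (1 + α)) := by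
    have hJ : (∫ ω, |M ω| ∂P) ^ (1 + α) ≤ ∫ ω, |M ω| ^ (1 + α) ∂P :=
      (convexOn_rpow (by linarith : 1 ≤ 1 + α)).map_integral_le
        (Real.continuous_rpow_const hp.le).continuousOn isClosed_Ici
        (ae_of_all _ fun ω => abs_nonneg (M ω)) hMint.abs ((memLp_iff_abs_rpow hp hMp.1).2 hMp)
    rw [one_div, Real.le_rpow_inv_iff_of_pos (integral_nonneg fun ω => abs_nonneg _)
      (by positivity) hp]
    exact hJ.trans hMmom
  have hbdd : BddAbove (φ '' Set.Icc μlow μbar) :=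
    (isCompact_Icc.image hφ.continuous).bddAbove
  have hpt : ∀ᵐ ω ∂P, φ ((∑ i ∈ Finset.Icc 1 n, X i ω) / n) ≤
      sSup (φ '' Set.Icc μlow μbar) + L / n * |M ω| := by
    have hall : ∀ᵐ ω ∂P, ∀ i ∈ Finset.Icc 1 n,
        μlow ≤ (P[X i | ℱ (i - 1)]) ω ∧ (P[X i | ℱ (i - 1)]) ω ≤ μbar := by
      simpa only [Filter.eventually_all_finset] using hcond
    filter_upwards [hall] with ω hω
    set c := (∑ i ∈ Finset.Icc 1 n, (P[X i | ℱ (i - 1)]) ω) / n with hc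
    have hcmem : c ∈ Set.Icc μlow μbar := by
      have l := Finset.card_nsmul_le_sum _ _ _ fun i hi => (hω i hi).1
      have u := Finset.sum_le_card_nsmul _ _ _ fun i hi => (hω i hi).2
      simp only [Nat.card_Icc, add_tsub_cancel_right, nsmul_eq_mul] at l u
      constructor
      · rw [hc, le_div_iff₀ hn0]; linarith
      · rw [hc, div_le_iff₀ hn0]; linarith
    have hsup : φ c ≤ sSup (φ '' Set.Icc μlow μbar) := le_csSup hbdd ⟨c, hcmem, rfl⟩
    have hdiff : (∑ i ∈ Finset.Icc 1 n, X i ω) / n - c = M ω / n := by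
      simp only [hc, hMdef, D, Pi.sub_apply, Finset.sum_sub_distrib]
      ring
    have hlip := hφ.dist_le_mul ((∑ i ∈ Finset.Icc 1 n, X i ω) / n) c
    rw [Real.dist_eq, Real.dist_eq, hdiff, abs_div, abs_of_pos hn0] at hlip
    have := (le_abs_self _).trans hlip
    have e : (L : ℝ) * (|M ω| / n) = L / n * |M ω| := by ring
    linarith
  have hφint : Integrable (fun ω => φ ((∑ i ∈ Finset.Icc 1 n, X i ω) / n)) P := by
    have hS : Integrable (fun ω => (∑ i ∈ Finset.Icc 1 n, X i ω) / n) P :=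
      (integrable_finsetSum _ hint).div_const _
    refine ((integrable_const |φ 0|).add (hS.abs.const_mul (L : ℝ))).mono'
      (hφ.continuous.comp_aestronglyMeasurable hS.1) (ae_of_all _ fun ω => ?_)
    have := hφ.dist_le_mul ((∑ i ∈ Finset.Icc 1 n, X i ω) / n) 0
    rw [Real.dist_eq, Real.dist_eq, sub_zero] at this
    have h2 := abs_sub_abs_le_abs_sub (φ ((∑ i ∈ Finset.Icc 1 n, X i ω) / n)) (φ 0)
    simp only [Real.norm_eq_abs, Pi.add_apply]
    linarith
  have hfin := integral_mono_ae hφint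
    ((integrable_const (sSup (φ '' Set.Icc μlow μbar))).add (hMint.abs.const_mul (L / n : ℝ))) hpt
  simp only [Pi.add_apply] at hfin
  rw [integral_add (integrable_const _) (hMint.abs.const_mul _), integral_const_mul] at hfin
  simp only [integral_const, probReal_univ, one_smul] at hfin
  -- dividing by `n` turns `(4 n C_α)^{1/p}` into `(4 C_α / n^α)^{1/p}`, since `n = (n^p)^{1/p}`
  have hscale : (4 * Cα / (n : ℝ) ^ α) ^ (1 / (1 + α)) =
      (n * (4 * Cα)) ^ (1 / (1 + α)) / n := by
    have e : 4 * Cα / (n : ℝ) ^ α = n * (4 * Cα) / (n : ℝ) ^ (1 + α) := by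
      rw [Real.rpow_add hn0, Real.rpow_one]
      field_simp
    rw [e, Real.div_rpow (by positivity) (by positivity), ← Real.rpow_mul hn0.le,
      mul_one_div_cancel hp.ne', Real.rpow_one]
  rw [hscale]
  have hL := mul_le_mul_of_nonneg_left hMabs (show (0 : ℝ) ≤ L / n by positivity)
  have e : (L : ℝ) * ((n * (4 * Cα)) ^ (1 / (1 + α)) / n) =
      L / n * (n * (4 * Cα)) ^ (1 / (1 + α)) := by ring
  linarith
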